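/- For all integers N ≥ 1 and s ≥ 1, |{𝐤 ∈ ℕ₀^s ∖ {0} : ‖𝛋‖₁ ≤ N}| < exp(π√(s(N+1)/3)). -/

import Mathlib

open MeasureTheory ProbabilityTheory
open scoped ENNReal

namespace MedianQMC


/-- The set of 0-indexed positions of nonzero binary digits of `k`
(so `κ`, the 1-indexed set from the paper, is the image of this under `·+1`). -/
def bitFinset (k : ℕ) : Finset ℕ := (Finset.range (k+1)).filter (fun i => k.testBit i)

/-- `‖κ‖₁ = ∑_{ℓ∈κ} ℓ` for the 1-indexed digit set `κ` of `k`. -/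
def norm1 (k : ℕ) : ℕ := ∑ i ∈ bitFinset k, (i+1)

/-- `‖𝛋‖₁`. -/
def norm1Vec {s : ℕ} (k : Fin s → ℕ) : ℕ := ∑ j, norm1 (k j)

/-- `‖𝛋‖₀`, the total number of nonzero binary digits. -/
def norm0Vec {s : ℕ} (k : Fin s → ℕ) : ℕ := ∑ j, (bitFinset (k j)).card

/-- `‖⌈𝛋⌉‖₁`; note `⌈κ_j⌉ = Nat.size (k j)`. -/
def ceilSum {s : ℕ} (k : Fin s → ℕ) : ℕ := ∑ j, Nat.size (k j)

/-- the support `s(𝐤)`. -/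
def supp {s : ℕ} (k : Fin s → ℕ) : Finset (Fin s) := Finset.univ.filter (fun j => k j ≠ 0)

/-- Row `i` (0-indexed; paper row `i+1`) of `C j`, as a vector, `0` if out of range. -/
def rowOf {s m : ℕ} (C : Fin s → Matrix (Fin m) (Fin m) (ZMod 2)) (j : Fin s) (i : ℕ) :
    Fin m → ZMod 2 :=
  fun c => if h : i < m then C j ⟨i, h⟩ c else 0

/-- The row space of the stacked matrix `C^{(q)}` consisting of the first `q j` rows of each `C j`. -/
def rowSpace {s m : ℕ} (C : Fin s → Matrix (Fin m) (Fin m) (ZMod 2)) (q : Fin s → ℕ) :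
    Submodule (ZMod 2) (Fin m → ZMod 2) :=
  Submodule.span (ZMod 2) {v | ∃ j i, i < q j ∧ v = rowOf C j i}

/-- The rank of the stacked matrix `C^{(q)}`. -/
noncomputable def stackRank {s m : ℕ} (C : Fin s → Matrix (Fin m) (Fin m) (ZMod 2))
    (q : Fin s → ℕ) : ℕ :=
  Module.finrank (ZMod 2) (rowSpace C q)

/-- `C₁,…,C_s` generate a digital `(t,m,s)`-net in base 2: every stacked matrix `C^{(q)}`
with `∑ q j = m - t` has full row rank `m - t`.  (Note each row of `C^{(q)}` is a genuine
row since `q j ≤ m - t ≤ m` automatically.) -/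
def IsDigitalNet {s m : ℕ} (t : ℕ) (C : Fin s → Matrix (Fin m) (Fin m) (ZMod 2)) : Prop :=
  ∀ q : Fin s → ℕ, (∑ j, q j) = m - t → stackRank C q = m - t

/-- structural constraints of a linear scramble matrix with rows indexed by `ℕ`
(0-indexed; paper row `ℓ` is row `ℓ-1` here): ones on the diagonal, zeros above it. -/
def IsLinearScramble {s m : ℕ} (M : Fin s → ℕ → Fin m → ZMod 2) : Prop :=
  ∀ j : Fin s, ∀ r : Fin m, M j (r : ℕ) r = 1 ∧ ∀ ℓ : ℕ, ℓ < (r : ℕ) → M j ℓ r = 0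

/-- The condition `∑_{j=1}^s k⃗_jᵀ M_j C_j = 0`. -/
def ZeroCond {s m : ℕ} (C : Fin s → Matrix (Fin m) (Fin m) (ZMod 2))
    (M : Fin s → ℕ → Fin m → ZMod 2) (k : Fin s → ℕ) : Prop :=
  ∀ c : Fin m, (∑ j, ∑ i ∈ bitFinset (k j), ∑ r : Fin m, M j i r * C j r c) = 0

/-- index type for the free (random) entries of the scramble matrices: entries strictly
below the diagonal, i.e. with column index `< ` row index. -/
def FreeIdx (s m : ℕ) : Type := {p : Fin s × ℕ × Fin m // (p.2.2 : ℕ) < p.2.1}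

/-- index type for all random bits of a scramble-with-digital-shift. -/
def ScrIdx (s m : ℕ) : Type := FreeIdx s m ⊕ (Fin s × ℕ)

variable {Ω : Type*}

/-- the family of free entries of the random matrices. -/
def freeVar {s m : ℕ} (M : Ω → Fin s → ℕ → Fin m → ZMod 2) : FreeIdx s m → Ω → ZMod 2 :=
  fun p ω => M ω p.1.1 p.1.2.1 p.1.2.2

/-- the family of all random bits of a scramble-with-digital-shift. -/
def scrVar {s m : ℕ} (M : Ω → Fin s → ℕ → Fin m → ZMod 2)
    (D : Ω → Fin s → ℕ → ZMod 2) : ScrIdx s m → Ω → ZMod 2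
  | Sum.inl p => freeVar M p
  | Sum.inr q => fun ω => D ω q.1 q.2

/-- `x = Σ_{ℓ≥1} 2^{−ℓ} y_ℓ` (here `y` is 0-indexed). -/
noncomputable def coordI (y : ℕ → ZMod 2) : ℝ := ∑' ℓ : ℕ, ((y ℓ).val : ℝ) / 2 ^ (ℓ + 1)

/-- finite-precision coordinate `x = Σ_{ℓ=1}^E 2^{−ℓ} y_ℓ`. -/
noncomputable def coordF (E : ℕ) (y : ℕ → ZMod 2) : ℝ :=
  ∑ ℓ ∈ Finset.range E, ((y ℓ).val : ℝ) / 2 ^ (ℓ + 1)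

/-- digit string `M_j C_j ī + D_j` of the scrambled point `x_{ij}`. -/
def scrDigits {s m : ℕ} (C : Fin s → Matrix (Fin m) (Fin m) (ZMod 2))
    (M : Fin s → ℕ → Fin m → ZMod 2) (D : Fin s → ℕ → ZMod 2) (i : ℕ) (j : Fin s) :
    ℕ → ZMod 2 :=
  fun ℓ => (∑ r : Fin m, M j ℓ r * ∑ c : Fin m, C j r c *
      (if i.testBit (c : ℕ) then 1 else 0)) + D j ℓ

/-- infinite-precision estimator `μ̂_∞ = 2^{-m} ∑_{i=0}^{2^m-1} f(x_i)`. -/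
noncomputable def estInf {s m : ℕ} (f : (Fin s → ℝ) → ℝ)
    (C : Fin s → Matrix (Fin m) (Fin m) (ZMod 2))
    (M : Fin s → ℕ → Fin m → ZMod 2) (D : Fin s → ℕ → ZMod 2) : ℝ :=
  ((2 : ℝ) ^ m)⁻¹ * ∑ i ∈ Finset.range (2 ^ m), f (fun j => coordI (scrDigits C M D i j))

/-- precision-`E` estimator `μ̂_E`. -/
noncomputable def estE {s m : ℕ} (E : ℕ) (f : (Fin s → ℝ) → ℝ)
    (C : Fin s → Matrix (Fin m) (Fin m) (ZMod 2))
    (M : Fin s → ℕ → Fin m → ZMod 2) (D : Fin s → ℕ → ZMod 2) : ℝ :=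
  ((2 : ℝ) ^ m)⁻¹ * ∑ i ∈ Finset.range (2 ^ m), f (fun j => coordF E (scrDigits C M D i j))

/-- half-open unit cube `[0,1)^s`. -/
def cube (s : ℕ) : Set (Fin s → ℝ) := Set.univ.pi fun _ => Set.Ico (0:ℝ) 1

/-- closed unit cube `[0,1]^s`. -/
def cubeC (s : ℕ) : Set (Fin s → ℝ) := Set.univ.pi fun _ => Set.Icc (0:ℝ) 1

/-- `ℓ`-th (0-indexed; paper `ℓ+1`) binary digit of `x ∈ [0,1)`, using the expansion ending
in zeros for dyadic rationals. -/
noncomputable def rdigit (x : ℝ) (i : ℕ) : ℕ := (⌊x * 2 ^ (i+1)⌋).toNat % 2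

/-- Walsh function `wal_k`. -/
noncomputable def walsh (k : ℕ) (x : ℝ) : ℝ := (-1 : ℝ) ^ (∑ i ∈ bitFinset k, rdigit x i)

/-- multivariate Walsh function `wal_𝐤`. -/
noncomputable def walshVec {s : ℕ} (k : Fin s → ℕ) (x : Fin s → ℝ) : ℝ :=
  ∏ j, walsh (k j) (x j)

/-- Walsh coefficient `f̂(𝐤)`. -/
noncomputable def fhat {s : ℕ} (f : (Fin s → ℝ) → ℝ) (k : Fin s → ℕ) : ℝ :=
  ∫ x in cube s, f x * walshVec k x

/-- the sign `(−1)^{Σ_j k⃗_jᵀ D_j}`. -/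
noncomputable def walshSign {s : ℕ} (D : Fin s → ℕ → ZMod 2) (k : Fin s → ℕ) : ℝ :=
  (-1 : ℝ) ^ (∑ j, ∑ i ∈ bitFinset (k j), (D j i).val)

/-- the constant `λ = 3 log(2)²/π²`. -/
noncomputable def lam : ℝ := 3 * Real.log 2 ^ 2 / Real.pi ^ 2

/-- the `i`-th smallest (0-indexed) of the values `v`. -/
noncomputable def orderStat {n : ℕ} (v : Fin n → ℝ) (i : ℕ) : ℝ :=
  (((List.ofFn v).mergeSort fun a b => @decide (a ≤ b) (Classical.propDecidable _)).getD i 0)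

end MedianQMC

namespace MedianQMC

/-!
By Rankin's trick, for `0 < q ≤ 1` the number of `𝐤` with `‖𝛋‖₁ ≤ N` is at most
`q ^ (-N) * ∑ q ^ ‖𝛋‖₁`. Binary expansion identifies `ℕ₀` with the finite subsets of
`{1, 2, …}`, so the sum factors as `(∏ (1 + q ^ i)) ^ s`, and Euler's identity
`∏ (1 + q ^ i) = ∏ (1 - q ^ (2 * i - 1))⁻¹` turns it into a product whose logarithm has a power
series with nonnegative terms. For `q = exp (-t)` that logarithm is
`∑ₙ 1 / (2 * n * sinh (n * t)) ≤ ∑ₙ 1 / (2 * n ^ 2 * t) = π ^ 2 / (12 * t)`, so the count is at most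
`exp (t * N + s * π ^ 2 / (12 * t))`. Replacing `N` by `N + 1` makes the inequality strict, and
minimizing over `t` then gives the claim.
-/

lemma card_filter_le_mul_pow_le {ι R : Type*} [Semiring R] [PartialOrder R]
    [IsOrderedRing R] (P : Finset ι) (f : ι → ℕ) (N : ℕ) {q : R} (hq₀ : 0 ≤ q) (hq₁ : q ≤ 1) :
    (P.filter (f · ≤ N)).card * q ^ N ≤ ∑ k ∈ P, q ^ f k :=
  calc ((P.filter (f · ≤ N)).card : R) * q ^ N = ∑ _k ∈ P.filter (f · ≤ N), q ^ N := by
        rw [Finset.sum_const, nsmul_eq_mul]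
    _ ≤ ∑ k ∈ P.filter (f · ≤ N), q ^ f k :=
        Finset.sum_le_sum fun _ hk ↦ pow_le_pow_of_le_one hq₀ hq₁ (Finset.mem_filter.1 hk).2
    _ ≤ ∑ k ∈ P, q ^ f k :=
        Finset.sum_le_sum_of_subset_of_nonneg (Finset.filter_subset _ _)
          fun _ _ _ ↦ pow_nonneg hq₀ _

section BinaryDigits

lemma bitFinset_eq_toFinset_bitIndices (k : ℕ) : bitFinset k = k.bitIndices.toFinset := by
  ext i
  simp only [bitFinset, Finset.mem_filter, Finset.mem_range, List.mem_toFinset,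
    Nat.mem_bitIndices, and_iff_right_iff_imp]
  intro hi
  exact (Nat.lt_two_pow_self.trans_le (Nat.ge_two_pow_of_testBit hi)).trans k.lt_succ_self

lemma bitFinset_subset_range_iff {k M : ℕ} : bitFinset k ⊆ Finset.range M ↔ k < 2 ^ M := by
  rw [bitFinset_eq_toFinset_bitIndices]
  constructor
  · intro h
    rw [← Finset.sum_toFinset_bitIndices_two_pow k]
    exact Nat.geomSum_lt le_rfl fun i hi ↦ Finset.mem_range.1 (h hi)
  · intro hk i hi
    have hik : 2 ^ i ≤ k := Nat.two_pow_le_of_mem_bitIndices (List.mem_toFinset.1 hi)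
    exact Finset.mem_range.2 ((Nat.pow_lt_pow_iff_right one_lt_two).1 (hik.trans_lt hk))

lemma lt_two_pow_norm1 (k : ℕ) : k < 2 ^ norm1 k :=
  bitFinset_subset_range_iff.1 fun _ hi ↦ Finset.mem_range.2 <|
    Finset.single_le_sum (f := (· + 1)) (fun _ _ ↦ Nat.zero_le _) hi

lemma norm1_le_norm1Vec {s : ℕ} (k : Fin s → ℕ) (j : Fin s) : norm1 (k j) ≤ norm1Vec k :=
  Finset.single_le_sum (f := fun j ↦ norm1 (k j)) (fun _ _ ↦ Nat.zero_le _) (Finset.mem_univ j)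

lemma setOf_norm1Vec_le_eq_coe_filter (s N : ℕ) :
    {k : Fin s → ℕ | norm1Vec k ≤ N} =
      (Fintype.piFinset fun _ : Fin s ↦ Finset.range (2 ^ N)).filter (norm1Vec · ≤ N) := by
  ext k
  simp only [Set.mem_ofPred_eq, Finset.coe_filter, Fintype.mem_piFinset, Finset.mem_range,
    iff_and_self]
  exact fun hk j ↦ (lt_two_pow_norm1 _).trans_le <|
    Nat.pow_le_pow_right two_pos ((norm1_le_norm1Vec k j).trans hk)

variable {R : Type*} [CommSemiring R]

lemma sum_range_two_pow_prod_bitFinset (f : ℕ → R) (M : ℕ) :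
    ∑ k ∈ Finset.range (2 ^ M), ∏ i ∈ bitFinset k, f i = ∏ i ∈ Finset.range M, (1 + f i) := by
  rw [Finset.prod_one_add]
  refine Finset.sum_nbij' bitFinset (fun t ↦ ∑ i ∈ t, 2 ^ i) ?_ ?_ ?_ ?_ fun _ _ ↦ rfl
  · exact fun k hk ↦ Finset.mem_powerset.2 (bitFinset_subset_range_iff.2 (Finset.mem_range.1 hk))
  · intro t ht
    exact Finset.mem_range.2 <| Nat.geomSum_lt le_rfl fun i hi ↦
      Finset.mem_range.1 (Finset.mem_powerset.1 ht hi)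
  · intro k _
    rw [bitFinset_eq_toFinset_bitIndices, Finset.sum_toFinset_bitIndices_two_pow]
  · intro t _
    rw [bitFinset_eq_toFinset_bitIndices, Finset.toFinset_bitIndices_sum_two_pow]

lemma sum_piFinset_pow_norm1Vec (q : R) (s M : ℕ) :
    ∑ k ∈ Fintype.piFinset fun _ : Fin s ↦ Finset.range (2 ^ M), q ^ norm1Vec k =
      (∏ i ∈ Finset.range M, (1 + q ^ (i + 1))) ^ s := by
  simp only [← sum_range_two_pow_prod_bitFinset, Finset.prod_pow_eq_pow_sum, Finset.sum_pow',
    norm1Vec, norm1]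

end BinaryDigits

section EulerProduct

-- Euler's identity `∏ (1 + q ^ i) * ∏ (1 - q ^ (2 * i - 1)) = 1` with its truncation error.
lemma prod_one_add_pow_mul_prod_one_sub_pow_odd {R : Type*} [CommRing R] (q : R) (M : ℕ) :
    (∏ i ∈ Finset.range M, (1 + q ^ (i + 1))) * ∏ i ∈ Finset.range M, (1 - q ^ (2 * i + 1)) =
      ∏ i ∈ Finset.range M, (1 - q ^ (M + i + 1)) := by
  induction M with
  | zero => simp only [Finset.prod_range_zero, mul_one]
  | succ M ih =>
    have shift : (∏ i ∈ Finset.range M, (1 - q ^ (M + i + 1))) * (1 - q ^ (2 * M + 1)) =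
        (∏ i ∈ Finset.range M, (1 - q ^ (M + 1 + i + 1))) * (1 - q ^ (M + 1)) := by
      have h := (Finset.prod_range_succ (fun i ↦ 1 - q ^ (M + i + 1)) M).symm.trans
        (Finset.prod_range_succ' _ M)
      simpa only [two_mul, add_zero, add_right_comm M 1, ← add_assoc] using h
    simp only [Finset.prod_range_succ]
    linear_combination (1 + q ^ (M + 1)) * (1 - q ^ (2 * M + 1)) * ih + (1 + q ^ (M + 1)) * shift

lemma prod_one_add_pow_mul_prod_one_sub_pow_odd_le_one {R : Type*} [CommRing R] [PartialOrder R]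
    [IsOrderedRing R] {q : R} (hq₀ : 0 ≤ q) (hq₁ : q ≤ 1) (M : ℕ) :
    (∏ i ∈ Finset.range M, (1 + q ^ (i + 1))) * ∏ i ∈ Finset.range M, (1 - q ^ (2 * i + 1)) ≤
      1 := by
  rw [prod_one_add_pow_mul_prod_one_sub_pow_odd]
  exact Finset.prod_le_one (fun i _ ↦ sub_nonneg.2 (pow_le_one₀ hq₀ hq₁))
    fun i _ ↦ sub_le_self _ (pow_nonneg hq₀ _)

lemma sum_exp_neg_pow_odd_mul_two_mul_sinh (y : ℝ) (M : ℕ) :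
    (∑ l ∈ Finset.range M, Real.exp (-y) ^ (2 * l + 1)) * (2 * Real.sinh y) =
      1 - Real.exp (-y) ^ (2 * M) := by
  have telescope (l : ℕ) : Real.exp (-y) ^ (2 * l + 1) * (2 * Real.sinh y) =
      Real.exp (-y) ^ (2 * l) - Real.exp (-y) ^ (2 * (l + 1)) := by
    have hinv : Real.exp (-y) * Real.exp y = 1 := by
      rw [← Real.exp_add, neg_add_cancel, Real.exp_zero]
    rw [Real.sinh_eq]
    linear_combination Real.exp (-y) ^ (2 * l) * hinv
  simp only [Finset.sum_mul, telescope]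
  rw [Finset.sum_range_sub' fun l ↦ Real.exp (-y) ^ (2 * l), mul_zero, pow_zero]

lemma sum_exp_neg_pow_odd_le {y : ℝ} (hy : 0 < y) (M : ℕ) :
    ∑ l ∈ Finset.range M, Real.exp (-y) ^ (2 * l + 1) ≤ 1 / (2 * y) := by
  rw [le_div_iff₀ (by positivity)]
  calc (∑ l ∈ Finset.range M, Real.exp (-y) ^ (2 * l + 1)) * (2 * y)
      ≤ (∑ l ∈ Finset.range M, Real.exp (-y) ^ (2 * l + 1)) * (2 * Real.sinh y) := by
        gcongr
        exact Real.self_le_sinh_iff.2 hy.le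
    _ = 1 - Real.exp (-y) ^ (2 * M) := sum_exp_neg_pow_odd_mul_two_mul_sinh y M
    _ ≤ 1 := sub_le_self _ (by positivity)

variable {t : ℝ}

lemma sum_neg_log_one_sub_exp_neg_pow_odd_le (ht : 0 < t) (M : ℕ) :
    ∑ l ∈ Finset.range M, -Real.log (1 - Real.exp (-t) ^ (2 * l + 1)) ≤
      Real.pi ^ 2 / (12 * t) := by
  have log_series : HasSum
      (fun n : ℕ ↦ ∑ l ∈ Finset.range M, (Real.exp (-t) ^ (2 * l + 1)) ^ (n + 1) / (n + 1 : ℝ))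
      (∑ l ∈ Finset.range M, -Real.log (1 - Real.exp (-t) ^ (2 * l + 1))) := by
    refine hasSum_sum fun l _ ↦ Real.hasSum_pow_div_log_of_abs_lt_one ?_
    rw [abs_of_pos (by positivity)]
    exact pow_lt_one₀ (Real.exp_nonneg _) (Real.exp_lt_one_iff.2 (neg_lt_zero.2 ht))
      (Nat.succ_ne_zero _)
  have zeta_series : HasSum (fun n : ℕ ↦ 1 / (2 * t) * (1 / (n + 1 : ℝ) ^ 2))
      (1 / (2 * t) * (Real.pi ^ 2 / 6)) := by
    refine HasSum.mul_left _ ?_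
    simpa using (hasSum_nat_add_iff' 1).2 hasSum_zeta_two
  have termwise (n : ℕ) :
      ∑ l ∈ Finset.range M, (Real.exp (-t) ^ (2 * l + 1)) ^ (n + 1) / (n + 1 : ℝ) ≤
        1 / (2 * t) * (1 / (n + 1 : ℝ) ^ 2) := by
    have exp_pow : Real.exp (-t) ^ (n + 1) = Real.exp (-((n + 1) * t)) := by
      rw [← Real.exp_nat_mul, Nat.cast_succ, mul_neg]
    simp only [← Finset.sum_div, pow_right_comm _ _ (n + 1), exp_pow]
    calc _ ≤ 1 / (2 * ((n + 1) * t)) / (n + 1 : ℝ) := by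
          gcongr
          exact sum_exp_neg_pow_odd_le (by positivity) M
      _ = 1 / (2 * t) * (1 / (n + 1 : ℝ) ^ 2) := by field_simp
  calc _ ≤ 1 / (2 * t) * (Real.pi ^ 2 / 6) := hasSum_le termwise log_series zeta_series
    _ = Real.pi ^ 2 / (12 * t) := by ring

lemma prod_one_add_exp_neg_pow_le (ht : 0 < t) (M : ℕ) :
    ∏ i ∈ Finset.range M, (1 + Real.exp (-t) ^ (i + 1)) ≤ Real.exp (Real.pi ^ 2 / (12 * t)) := by
  have hq₁ : Real.exp (-t) < 1 := Real.exp_lt_one_iff.2 (neg_lt_zero.2 ht)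
  have factor_pos (i : ℕ) : 0 < 1 - Real.exp (-t) ^ (2 * i + 1) :=
    sub_pos.2 (pow_lt_one₀ (Real.exp_nonneg _) hq₁ (Nat.succ_ne_zero _))
  have odd_pos : 0 < ∏ i ∈ Finset.range M, (1 - Real.exp (-t) ^ (2 * i + 1)) :=
    Finset.prod_pos fun i _ ↦ factor_pos i
  calc ∏ i ∈ Finset.range M, (1 + Real.exp (-t) ^ (i + 1))
      ≤ (∏ i ∈ Finset.range M, (1 - Real.exp (-t) ^ (2 * i + 1)))⁻¹ := by
        rw [← one_div, le_div_iff₀ odd_pos]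
        exact prod_one_add_pow_mul_prod_one_sub_pow_odd_le_one (Real.exp_nonneg _) hq₁.le M
    _ = Real.exp (∑ i ∈ Finset.range M, -Real.log (1 - Real.exp (-t) ^ (2 * i + 1))) := by
        rw [Finset.sum_neg_distrib, ← Real.log_prod fun i _ ↦ (factor_pos i).ne',
          Real.exp_neg (Real.log _), Real.exp_log odd_pos]
    _ ≤ Real.exp (Real.pi ^ 2 / (12 * t)) :=
        Real.exp_le_exp.2 (sum_neg_log_one_sub_exp_neg_pow_odd_le ht M)

end EulerProduct

lemma ncard_setOf_norm1Vec_le_le_exp (N s : ℕ) {t : ℝ} (ht : 0 < t) :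
    ({k : Fin s → ℕ | norm1Vec k ≤ N}.ncard : ℝ) ≤
      Real.exp (t * N + s * (Real.pi ^ 2 / (12 * t))) := by
  have hq₁ : Real.exp (-t) ≤ 1 := Real.exp_le_one_iff.2 (neg_nonpos.2 ht.le)
  have rankin : ({k : Fin s → ℕ | norm1Vec k ≤ N}.ncard : ℝ) * Real.exp (-t) ^ N ≤
      Real.exp (s * (Real.pi ^ 2 / (12 * t))) := by
    rw [setOf_norm1Vec_le_eq_coe_filter, Set.ncard_coe_finset]
    calc _ ≤ ∑ k ∈ Fintype.piFinset fun _ : Fin s ↦ Finset.range (2 ^ N),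
            Real.exp (-t) ^ norm1Vec k :=
          card_filter_le_mul_pow_le _ _ N (Real.exp_nonneg _) hq₁
      _ = (∏ i ∈ Finset.range N, (1 + Real.exp (-t) ^ (i + 1))) ^ s :=
          sum_piFinset_pow_norm1Vec _ s N
      _ ≤ Real.exp (Real.pi ^ 2 / (12 * t)) ^ s := by
          gcongr
          exact prod_one_add_exp_neg_pow_le ht N
      _ = Real.exp (s * (Real.pi ^ 2 / (12 * t))) := (Real.exp_nat_mul _ s).symm
  have exp_pow : Real.exp (-t) ^ N = (Real.exp (t * N))⁻¹ := by
    rw [← Real.exp_nat_mul, ← Real.exp_neg, mul_neg, mul_comm]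
  rw [exp_pow, mul_inv_le_iff₀ (Real.exp_pos _)] at rankin
  rwa [Real.exp_add, mul_comm]

/-- finite-`N` bound on the number of `𝐤 ∈ ℕ₀^s ∖ {0}` with `‖𝛋‖₁ ≤ N`. -/
theorem count_le_lt (N s : ℕ) (hN : 1 ≤ N) (hs : 1 ≤ s) :
    ({k : Fin s → ℕ | k ≠ 0 ∧ norm1Vec k ≤ N}.ncard : ℝ) <
      Real.exp (Real.pi * Real.sqrt (s * (N + 1) / 3)) := by
  set r := Real.sqrt (s * (N + 1) / 3)
  have hr : 0 < r := Real.sqrt_pos.2 (by positivity)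
  have hr_sq : r ^ 2 = s * (N + 1) / 3 := Real.sq_sqrt (by positivity)
  -- `t` minimizes `t * (N + 1) + s * π ^ 2 / (12 * t)`, which makes the two summands equal.
  obtain ⟨t, ht, t_mul, div_t⟩ : ∃ t : ℝ, 0 < t ∧ t * (N + 1) = Real.pi * r / 2 ∧
      s * (Real.pi ^ 2 / (12 * t)) = Real.pi * r / 2 := by
    refine ⟨Real.pi * r / (2 * (N + 1)), by positivity, by field_simp, ?_⟩
    field_simp
    linarith
  have finite : {k : Fin s → ℕ | norm1Vec k ≤ N}.Finite :=
    setOf_norm1Vec_le_eq_coe_filter s N ▸ Finset.finite_toSet _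
  calc ({k : Fin s → ℕ | k ≠ 0 ∧ norm1Vec k ≤ N}.ncard : ℝ)
      ≤ {k : Fin s → ℕ | norm1Vec k ≤ N}.ncard :=
        Nat.cast_le.2 (Set.ncard_le_ncard (fun _ hk ↦ hk.2) finite)
    _ ≤ Real.exp (t * N + s * (Real.pi ^ 2 / (12 * t))) := ncard_setOf_norm1Vec_le_le_exp N s ht
    _ < Real.exp (Real.pi * r) := Real.exp_lt_exp.2 (by linarith)

end MedianQMC
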